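/- arXiv:1704.05321 — 2 statements merged into one kernel-verified Lean document; each statement's English description precedes it below -/
import Mathlib

section
/- Characterization of the Logarithmic Least Squares Method (uniqueness): let n ≥ 3 and let f be any weighting method on n×n pairwise comparison matrices satisfying (CO) for every consistent pairwise comparison matrix A, f_i(A)/f_j(A) = a_{i,j} for all i, j, and (IT) f(A) = f(Â) whenever Â is obtained from A by an α-transformation on some triad with some α > 0. Then for every n×n pairwise comparison matrix A, f(A) equals the LLSM weight vector of A. -/
open Finset

/-- A pairwise comparison matrix: all entries positive, reciprocal. -/
def IsPCM {n : ℕ} (A : Matrix (Fin n) (Fin n) ℝ) : Prop :=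
  (∀ i j, 0 < A i j) ∧ (∀ i j, A j i = 1 / A i j)

/-- Consistency of a pairwise comparison matrix. -/
def IsConsistent {n : ℕ} (A : Matrix (Fin n) (Fin n) ℝ) : Prop :=
  ∀ i j k, A i k = A i j * A j k

/-- The LLSM (row geometric mean) weight vector. -/
noncomputable def llsm {n : ℕ} (A : Matrix (Fin n) (Fin n) ℝ) : Fin n → ℝ :=
  fun i => (∏ j, A i j) ^ ((1 : ℝ) / n) / ∑ k, (∏ j, A k j) ^ ((1 : ℝ) / n)

/-- `Ahat` is obtained from `A` by an α-transformation on the triad `(i,j,k)`. -/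
def TriadTransform {n : ℕ} (A Ahat : Matrix (Fin n) (Fin n) ℝ)
    (i j k : Fin n) (α : ℝ) : Prop :=
  i ≠ j ∧ j ≠ k ∧ i ≠ k ∧ 0 < α ∧
  Ahat i j = α * A i j ∧ Ahat j i = A j i / α ∧
  Ahat j k = α * A j k ∧ Ahat k j = A k j / α ∧
  Ahat k i = α * A k i ∧ Ahat i k = A i k / α ∧
  ∀ l m : Fin n,
    (l, m) ≠ (i, j) → (l, m) ≠ (j, i) → (l, m) ≠ (j, k) → (l, m) ≠ (k, j) →
    (l, m) ≠ (k, i) → (l, m) ≠ (i, k) → Ahat l m = A l m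

/-!
In logarithmic coordinates a pairwise comparison matrix is a skew-symmetric matrix `L`, and an
α-transformation adds `log α` times the cycle matrix of its triad. A skew-symmetric matrix `D`
whose rows sum to zero is half of `∑ j, ∑ k, D j k • triadCycle i j k`, for any fixed `i`. Hence
α-transformations on triads through `i` connect any two pairwise comparison matrices with equal
row products; in particular they connect `A` to the consistent matrix of the ratios of its row
geometric means, on which (CO) determines `f`.
-/

section TriadCycle

open scoped Matrix

variable {ι R : Type*} [DecidableEq ι] [Ring R]

/-- The skew-symmetric matrix of the directed edge `i → j`; it is zero when `i = j`. -/
def skewSingle (i j : ι) : Matrix ι ι R :=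
  Matrix.single i j 1 - Matrix.single j i 1

/-- The skew-symmetric matrix of the directed cycle `i → j → k → i`: the direction in which an
α-transformation on the triad `(i, j, k)` moves the entrywise logarithm of a matrix. -/
def triadCycle (i j k : ι) : Matrix ι ι R :=
  skewSingle i j + skewSingle j k + skewSingle k i

theorem transpose_skewSingle (i j : ι) : (skewSingle i j : Matrix ι ι R)ᵀ = -skewSingle i j := by
  simp [skewSingle]

theorem transpose_triadCycle (i j k : ι) :
    (triadCycle i j k : Matrix ι ι R)ᵀ = -triadCycle i j k := by
  simp only [triadCycle, Matrix.transpose_add, transpose_skewSingle, neg_add]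

theorem triadCycle_eq_zero {i j k : ι} (h : ¬(i ≠ j ∧ j ≠ k ∧ i ≠ k)) :
    (triadCycle i j k : Matrix ι ι R) = 0 := by
  obtain rfl | rfl | rfl : i = j ∨ j = k ∨ i = k := by tauto
  all_goals simp [triadCycle, skewSingle]

theorem sum_smul_skewSingle [Fintype ι] (D : Matrix ι ι R) :
    ∑ j, ∑ k, D j k • (skewSingle j k : Matrix ι ι R) = D - Dᵀ := by
  conv_rhs => rw [Matrix.matrix_eq_sum_single D]
  simp [skewSingle, smul_sub, Matrix.transpose_sum]

theorem sum_smul_triadCycle [Fintype ι] {D : Matrix ι ι R} (hD : Dᵀ = -D)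
    (hrow : ∀ j, ∑ k, D j k = 0) (i : ι) :
    ∑ j, ∑ k, D j k • (triadCycle i j k : Matrix ι ι R) = 2 • D := by
  have hcol (k : ι) : ∑ j, D j k = 0 := by
    have hneg (j : ι) : D j k = -D k j := congr_fun₂ hD k j
    simp only [hneg, sum_neg_distrib, hrow, neg_zero]
  have hfirst : ∑ j, ∑ k, D j k • (skewSingle i j : Matrix ι ι R) = 0 := by
    simp only [← sum_smul, hrow, zero_smul, sum_const_zero]
  have hlast : ∑ j, ∑ k, D j k • (skewSingle k i : Matrix ι ι R) = 0 := by
    rw [sum_comm]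
    simp only [← sum_smul, hcol, zero_smul, sum_const_zero]
  simp only [triadCycle, smul_add, sum_add_distrib]
  rw [hfirst, hlast, sum_smul_skewSingle, hD]
  abel

end TriadCycle

section Logarithm

open scoped Matrix

variable {n : ℕ}

theorem isPCM_map_exp {L : Matrix (Fin n) (Fin n) ℝ} (hL : Lᵀ = -L) : IsPCM (L.map Real.exp) := by
  refine ⟨fun i j => Real.exp_pos _, fun i j => ?_⟩
  have hneg : L j i = -L i j := congr_fun₂ hL i j
  simp only [Matrix.map_apply, hneg, Real.exp_neg, one_div]

theorem IsPCM.transpose_map_log {A : Matrix (Fin n) (Fin n) ℝ} (hA : IsPCM A) :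
    (A.map Real.log)ᵀ = -A.map Real.log := by
  ext i j
  simp [hA.2 i j]

theorem IsPCM.map_exp_map_log {A : Matrix (Fin n) (Fin n) ℝ} (hA : IsPCM A) :
    (A.map Real.log).map Real.exp = A := by
  ext i j
  exact Real.exp_log (hA.1 i j)

theorem triadTransform_map_exp (L : Matrix (Fin n) (Fin n) ℝ) {i j k : Fin n} (hij : i ≠ j)
    (hjk : j ≠ k) (hik : i ≠ k) (t : ℝ) :
    TriadTransform (L.map Real.exp) ((L + t • triadCycle i j k).map Real.exp) i j k
      (Real.exp t) := by
  refine ⟨hij, hjk, hik, Real.exp_pos t, ?_, ?_, ?_, ?_, ?_, ?_, fun l m h₁ h₂ h₃ h₄ h₅ h₆ => ?_⟩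
  rotate_right
  · have hoff : (triadCycle i j k : Matrix (Fin n) (Fin n) ℝ) l m = 0 := by
      simp only [ne_eq, Prod.mk.injEq, @eq_comm _ l, @eq_comm _ m] at h₁ h₂ h₃ h₄ h₅ h₆
      simp [triadCycle, skewSingle, h₁, h₂, h₃, h₄, h₅, h₆]
    simp only [Matrix.map_apply, Matrix.add_apply, Matrix.smul_apply, hoff, smul_zero, add_zero]
  all_goals
    simp [triadCycle, skewSingle, hij, hjk, hik, hij.symm, hjk.symm, hik.symm,
      Real.exp_add, Real.exp_neg, div_eq_mul_inv, mul_comm]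

end Logarithm

section Connectivity

open scoped Matrix
open Relation (ReflTransGen)

variable {n : ℕ}

/-- `B` arises from the pairwise comparison matrix `A` by one α-transformation on a triad whose
first index is `i`. -/
def TriadStep (i : Fin n) (A B : Matrix (Fin n) (Fin n) ℝ) : Prop :=
  IsPCM A ∧ ∃ j k α, TriadTransform A B i j k α

theorem reflTransGen_triadStep_add_smul {L : Matrix (Fin n) (Fin n) ℝ} (hL : Lᵀ = -L)
    (i j k : Fin n) (t : ℝ) :
    ReflTransGen (TriadStep i) (L.map Real.exp) ((L + t • triadCycle i j k).map Real.exp) := by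
  by_cases hdistinct : i ≠ j ∧ j ≠ k ∧ i ≠ k
  · obtain ⟨hij, hjk, hik⟩ := hdistinct
    exact .single ⟨isPCM_map_exp hL, j, k, _, triadTransform_map_exp L hij hjk hik t⟩
  · rw [triadCycle_eq_zero hdistinct, smul_zero, add_zero]

theorem reflTransGen_triadStep_add_sum {L : Matrix (Fin n) (Fin n) ℝ} (hL : Lᵀ = -L)
    (i : Fin n) (c : Fin n × Fin n → ℝ) (s : Finset (Fin n × Fin n)) :
    ReflTransGen (TriadStep i) (L.map Real.exp)
      ((L + ∑ p ∈ s, c p • triadCycle i p.1 p.2).map Real.exp) := by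
  induction s using Finset.induction_on with
  | empty => simpa using ReflTransGen.refl
  | insert p s hp ih =>
    have hskew : (L + ∑ q ∈ s, c q • triadCycle i q.1 q.2)ᵀ =
        -(L + ∑ q ∈ s, c q • triadCycle i q.1 q.2) := by
      simp only [Matrix.transpose_add, Matrix.transpose_sum, Matrix.transpose_smul, hL,
        transpose_triadCycle, smul_neg, sum_neg_distrib, neg_add]
    rw [sum_insert hp, add_comm (c p • _), ← add_assoc]
    exact ih.trans (reflTransGen_triadStep_add_smul hskew i p.1 p.2 (c p))

theorem reflTransGen_triadStep_of_prod_eq {A B : Matrix (Fin n) (Fin n) ℝ} (hA : IsPCM A)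
    (hB : IsPCM B) (hprod : ∀ i, ∏ j, A i j = ∏ j, B i j) (i : Fin n) :
    ReflTransGen (TriadStep i) A B := by
  set D := B.map Real.log - A.map Real.log with hD
  have hskew : Dᵀ = -D := by
    rw [hD, Matrix.transpose_sub, hA.transpose_map_log, hB.transpose_map_log]
    abel
  have hrow (j : Fin n) : ∑ k, D j k = 0 := by
    simp only [hD, Matrix.sub_apply, Matrix.map_apply, sum_sub_distrib]
    rw [← Real.log_prod fun k _ => (hA.1 j k).ne', ← Real.log_prod fun k _ => (hB.1 j k).ne',
      hprod, sub_self]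
  have hsum : ∑ p : Fin n × Fin n, (2⁻¹ * D p.1 p.2) • triadCycle i p.1 p.2 = D := by
    simp only [mul_smul, ← smul_sum, Fintype.sum_prod_type, sum_smul_triadCycle hskew hrow i]
    module
  have hpath := reflTransGen_triadStep_add_sum hA.transpose_map_log i
    (fun p => 2⁻¹ * D p.1 p.2) univ
  rwa [hsum, hD, add_sub_cancel, hA.map_exp_map_log, hB.map_exp_map_log] at hpath

end Connectivity

section RatioMatrix

/-- The matrix of the ratios `w i / w j`: the consistent pairwise comparison matrix induced by a
positive vector `w`. -/
def ratioMatrix {ι K : Type*} [Div K] (w : ι → K) : Matrix ι ι K :=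
  Matrix.of fun i j => w i / w j

variable {n : ℕ}

theorem isPCM_ratioMatrix {w : Fin n → ℝ} (hw : ∀ i, 0 < w i) : IsPCM (ratioMatrix w) :=
  ⟨fun i j => div_pos (hw i) (hw j), fun i j => (one_div_div (w i) (w j)).symm⟩

theorem isConsistent_ratioMatrix {w : Fin n → ℝ} (hw : ∀ i, w i ≠ 0) :
    IsConsistent (ratioMatrix w) :=
  fun _ j _ => (div_mul_div_cancel₀ (hw j)).symm

theorem prod_ratioMatrix {ι K : Type*} [Fintype ι] [CommGroupWithZero K] (w : ι → K) (i : ι) :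
    ∏ j, ratioMatrix w i j = w i ^ Fintype.card ι / ∏ j, w j := by
  simp [ratioMatrix, prod_div_distrib]

theorem eq_div_sum_of_div_eq {ι K : Type*} [Fintype ι] [Field K] {v w : ι → K}
    (hsum : ∑ i, v i = 1) (hw : ∀ i, w i ≠ 0) (hratio : ∀ i j, v i / v j = w i / w j) (i : ι) :
    v i = w i / ∑ j, w j := by
  have hv : v i ≠ 0 := fun h => by simpa [h, hw i] using hratio i i
  have hmul (j : ι) : w j * v i = w i * v j := by
    have h := hratio j i
    rw [div_eq_div_iff hv (hw i)] at h
    rw [← h, mul_comm]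
  have hmul_sum : (∑ j, w j) * v i = w i := by
    simp only [sum_mul, hmul, ← mul_sum, hsum, mul_one]
  have hne : ∑ j, w j ≠ 0 := left_ne_zero_of_mul (hmul_sum ▸ hw i)
  rw [eq_div_iff hne, mul_comm, hmul_sum]

end RatioMatrix

section RowGeomMean

variable {n : ℕ}

/-- The geometric mean of the entries of row `i`, so that `llsm A` is `rowGeomMean A` divided by
the sum of its entries. -/
noncomputable def rowGeomMean (A : Matrix (Fin n) (Fin n) ℝ) (i : Fin n) : ℝ :=
  (∏ j, A i j) ^ ((1 : ℝ) / n)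

theorem IsPCM.rowGeomMean_pos {A : Matrix (Fin n) (Fin n) ℝ} (hA : IsPCM A) (i : Fin n) :
    0 < rowGeomMean A i :=
  Real.rpow_pos_of_pos (prod_pos fun j _ => hA.1 i j) _

theorem IsPCM.prod_prod_eq_one {A : Matrix (Fin n) (Fin n) ℝ} (hA : IsPCM A) :
    ∏ i, ∏ j, A i j = 1 := by
  have hpos : 0 < ∏ i, ∏ j, A i j := prod_pos fun i _ => prod_pos fun j _ => hA.1 i j
  have hinv : ∏ i, ∏ j, A i j = (∏ i, ∏ j, A i j)⁻¹ :=
    calc ∏ i, ∏ j, A i j = ∏ i, ∏ j, A j i := prod_comm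
      _ = ∏ i, ∏ j, (A i j)⁻¹ := prod_congr rfl fun i _ => prod_congr rfl fun j _ =>
        (hA.2 i j).trans (one_div _)
      _ = (∏ i, ∏ j, A i j)⁻¹ := by simp only [prod_inv_distrib]
  have hsq : (∏ i, ∏ j, A i j) ^ 2 = 1 := by
    rw [sq, mul_eq_one_iff_eq_inv₀ hpos.ne', ← hinv]
  exact (pow_eq_one_iff_of_nonneg hpos.le two_ne_zero).1 hsq

theorem IsPCM.prod_rowGeomMean {A : Matrix (Fin n) (Fin n) ℝ} (hA : IsPCM A) :
    ∏ i, rowGeomMean A i = 1 := by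
  simp only [rowGeomMean]
  rw [Real.finsetProd_rpow _ _ fun i _ => prod_nonneg fun j _ => (hA.1 i j).le,
    hA.prod_prod_eq_one, Real.one_rpow]

theorem IsPCM.prod_ratioMatrix_rowGeomMean {A : Matrix (Fin n) (Fin n) ℝ} (hA : IsPCM A)
    (i : Fin n) : ∏ j, ratioMatrix (rowGeomMean A) i j = ∏ j, A i j := by
  rw [prod_ratioMatrix, hA.prod_rowGeomMean, div_one, Fintype.card_fin, rowGeomMean, one_div]
  exact Real.rpow_inv_natCast_pow (prod_nonneg fun j _ => (hA.1 i j).le) i.pos.ne'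

end RowGeomMean

theorem llsm_characterization_general {n : ℕ} (i : Fin n)
    (f : Matrix (Fin n) (Fin n) ℝ → (Fin n → ℝ))
    (hsum : ∀ A, IsPCM A → ∑ j, f A j = 1)
    (hCO : ∀ A, IsPCM A → IsConsistent A → ∀ j k, f A j / f A k = A j k)
    (hIT : ∀ A B, TriadStep i A B → f A = f B) :
    ∀ A, IsPCM A → f A = llsm A := by
  intro A hA
  let G := ratioMatrix (rowGeomMean A)
  have hG : IsPCM G := isPCM_ratioMatrix hA.rowGeomMean_pos
  have hGcons : IsConsistent G := isConsistent_ratioMatrix fun j => (hA.rowGeomMean_pos j).ne'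
  have hpath : Relation.ReflTransGen (TriadStep i) A G :=
    reflTransGen_triadStep_of_prod_eq hA hG (fun j => (hA.prod_ratioMatrix_rowGeomMean j).symm) i
  have hfAG : f A = f G := by
    simpa only [Relation.reflTransGen_eq_self] using hpath.lift f hIT
  rw [hfAG]
  funext j
  exact eq_div_sum_of_div_eq (hsum G hG) (fun k => (hA.rowGeomMean_pos k).ne') (hCO G hG hGcons) j

theorem llsm_characterization {n : ℕ} (hn : 3 ≤ n)
    (f : Matrix (Fin n) (Fin n) ℝ → (Fin n → ℝ))
    (hweight : ∀ A, IsPCM A → (∀ i, 0 < f A i) ∧ ∑ i, f A i = 1)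
    (hCO : ∀ A, IsPCM A → IsConsistent A → ∀ i j, f A i / f A j = A i j)
    (hIT : ∀ A Ahat, IsPCM A →
      (∃ (i j k : Fin n) (α : ℝ), TriadTransform A Ahat i j k α) → f A = f Ahat) :
    ∀ A, IsPCM A → f A = llsm A :=
  llsm_characterization_general ⟨0, by lia⟩ f (fun A hA => (hweight A hA).2) hCO
    fun A B h => hIT A B h.1 ⟨_, h.2⟩
end

section
/- For every 3×3 pairwise comparison matrix A, the LLSM weight vector w of A is an eigenvector of A with positive eigenvalue: there exists λ > 0 such that A·w = λ·w. (Hence for n = 3 the Eigenvector Method and the Logarithmic Least Squares Method yield the same weight vector.) -/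
open Finset

/-!
Let `g` be the vector of row geometric means of `A` and `c` the geometric mean of the cycle
`A 0 1, A 1 2, A 2 0`. Comparing cubes gives `A i (i + 1) * g (i + 1) = c * g i`, with indices
modulo `3`, and reciprocity turns this into `A i (i - 1) * g (i - 1) = c⁻¹ * g i`. Hence rescaling
`A` by `g` produces the circulant matrix with first row `1, c, c⁻¹`, which has the all-ones vector
as an eigenvector, with eigenvalue `1 + c + c⁻¹`.
-/

theorem mulVec_eq_sum_smul_of_apply_add_mul {G R : Type*} [Fintype G] [AddGroup G]
    [NonUnitalNonAssocSemiring R] {A : Matrix G G R} {v w : G → R}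
    (h : ∀ i k, A i (i + k) * w (i + k) = v k * w i) :
    A.mulVec w = (∑ k, v k) • w := by
  ext i
  calc A.mulVec w i = ∑ k, A i (i + k) * w (i + k) :=
        (Equiv.sum_comp (Equiv.addLeft i) fun j ↦ A i j * w j).symm
    _ = ((∑ k, v k) • w) i := by simp only [h, ← sum_mul, Pi.smul_apply, smul_eq_mul]

theorem prod_univ_three_shift {M : Type*} [CommMonoid M] (f : Fin 3 → M) (i : Fin 3) :
    ∏ j, f j = f i * f (i + 1) * f (i + 2) := by
  simp [← Equiv.prod_comp (Equiv.addLeft i) f, Fin.prod_univ_three]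

section GeomMean

variable {ι : Type*} [Fintype ι]

/-- The geometric mean of a finite family of reals, meaningful for nonnegative entries. Applied to
the rows of a matrix it gives the unnormalized LLSM weights. -/
noncomputable def geomMean (x : ι → ℝ) : ℝ :=
  (∏ i, x i) ^ ((1 : ℝ) / Fintype.card ι)

theorem geomMean_pos {x : ι → ℝ} (hx : ∀ i, 0 < x i) : 0 < geomMean x :=
  Real.rpow_pos_of_pos (prod_pos fun i _ ↦ hx i) _

theorem geomMean_pow_card [Nonempty ι] {x : ι → ℝ} (hx : ∀ i, 0 ≤ x i) :
    geomMean x ^ Fintype.card ι = ∏ i, x i := by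
  rw [geomMean, one_div, Real.rpow_inv_natCast_pow (prod_nonneg fun i _ ↦ hx i)
    Fintype.card_ne_zero]

theorem geomMean_pow_three {x : Fin 3 → ℝ} (hx : ∀ i, 0 ≤ x i) (i : Fin 3) :
    geomMean x ^ 3 = x i * x (i + 1) * x (i + 2) := by
  rw [← prod_univ_three_shift, ← geomMean_pow_card hx, Fintype.card_fin]

end GeomMean

theorem llsm_eq_smul_geomMean {n : ℕ} (A : Matrix (Fin n) (Fin n) ℝ) :
    llsm A = (∑ k, geomMean (A k))⁻¹ • fun i ↦ geomMean (A i) := by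
  ext i
  simp [llsm, geomMean, div_eq_inv_mul]

/-- The geometric mean of the entries of `A` along the cycle `0 → 1 → ⋯ → n - 1 → 0`; addition in
`Fin n` is modulo `n`. For a pairwise comparison matrix with `n = 3` it measures the inconsistency
of the triad, being `1` exactly when `A` is consistent. -/
noncomputable def cycleGeomMean {n : ℕ} [NeZero n] (A : Matrix (Fin n) (Fin n) ℝ) : ℝ :=
  geomMean fun i ↦ A i (i + 1)

namespace IsPCM

section

variable {n : ℕ} {A : Matrix (Fin n) (Fin n) ℝ}

theorem apply_self (hA : IsPCM A) (i : Fin n) : A i i = 1 := by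
  have hsq : A i i * A i i = 1 := (eq_div_iff (hA.1 i i).ne').mp (hA.2 i i)
  exact (mul_self_eq_one_iff.mp hsq).resolve_right fun h ↦ by linarith [hA.1 i i]

theorem cycleGeomMean_pos [NeZero n] (hA : IsPCM A) : 0 < cycleGeomMean A :=
  geomMean_pos fun i ↦ hA.1 i (i + 1)

end

variable {A : Matrix (Fin 3) (Fin 3) ℝ}

theorem cycleGeomMean_pow_three (hA : IsPCM A) (i : Fin 3) :
    cycleGeomMean A ^ 3 = A i (i + 1) * A (i + 1) (i + 2) * A (i + 2) i := by
  rw [cycleGeomMean, geomMean_pow_three (fun j ↦ (hA.1 j (j + 1)).le) i,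
    show i + 1 + 1 = i + 2 by lia, show i + 2 + 1 = i by lia]

theorem geomMean_row_pow_three (hA : IsPCM A) (i : Fin 3) :
    geomMean (A i) ^ 3 = A i (i + 1) / A (i + 2) i := by
  rw [geomMean_pow_three (fun j ↦ (hA.1 i j).le) i, hA.apply_self, one_mul, hA.2 (i + 2) i,
    mul_one_div]

theorem apply_add_one_mul_geomMean (hA : IsPCM A) (i : Fin 3) :
    A i (i + 1) * geomMean (A (i + 1)) = cycleGeomMean A * geomMean (A i) := by
  have hg : ∀ j, 0 < geomMean (A j) := fun j ↦ geomMean_pos (hA.1 j)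
  have hnext : geomMean (A (i + 1)) ^ 3 = A (i + 1) (i + 2) / A i (i + 1) := by
    rw [hA.geomMean_row_pow_three, show i + 1 + 1 = i + 2 by lia, show i + 1 + 2 = i by lia]
  have hcube : (A i (i + 1) * geomMean (A (i + 1))) ^ 3 =
      (cycleGeomMean A * geomMean (A i)) ^ 3 := by
    have ha := (hA.1 i (i + 1)).ne'
    have hb := (hA.1 (i + 2) i).ne'
    rw [mul_pow, mul_pow, hnext, hA.cycleGeomMean_pow_three i, hA.geomMean_row_pow_three]
    field_simp
  exact (pow_left_inj₀ (mul_pos (hA.1 _ _) (hg _)).le (mul_pos hA.cycleGeomMean_pos (hg _)).le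
    three_ne_zero).mp hcube

theorem apply_add_two_mul_geomMean (hA : IsPCM A) (i : Fin 3) :
    A i (i + 2) * geomMean (A (i + 2)) = (cycleGeomMean A)⁻¹ * geomMean (A i) := by
  have hprev : A (i + 2) i * geomMean (A i) = cycleGeomMean A * geomMean (A (i + 2)) := by
    simpa only [show i + 2 + 1 = i by lia] using hA.apply_add_one_mul_geomMean (i + 2)
  rw [hA.2 (i + 2) i, one_div, inv_mul_eq_iff_eq_mul₀ (hA.1 _ _).ne', mul_left_comm, hprev,
    inv_mul_cancel_left₀ hA.cycleGeomMean_pos.ne']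

theorem mulVec_geomMean (hA : IsPCM A) :
    A.mulVec (fun i ↦ geomMean (A i)) =
      (1 + cycleGeomMean A + (cycleGeomMean A)⁻¹) • fun i ↦ geomMean (A i) := by
  have hcirculant : ∀ i k, A i (i + k) * geomMean (A (i + k)) =
      ![1, cycleGeomMean A, (cycleGeomMean A)⁻¹] k * geomMean (A i) := by
    intro i k
    fin_cases k
    · simp [hA.apply_self]
    · exact hA.apply_add_one_mul_geomMean i
    · exact hA.apply_add_two_mul_geomMean i
  simpa [Fin.sum_univ_three] using
    mulVec_eq_sum_smul_of_apply_add_mul (w := fun i ↦ geomMean (A i)) hcirculant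

end IsPCM

theorem llsm_eigenvector_three {A : Matrix (Fin 3) (Fin 3) ℝ} (hA : IsPCM A) :
    ∃ lam : ℝ, 0 < lam ∧ A.mulVec (llsm A) = lam • llsm A := by
  have hc : 0 < cycleGeomMean A := hA.cycleGeomMean_pos
  refine ⟨1 + cycleGeomMean A + (cycleGeomMean A)⁻¹, by positivity, ?_⟩
  rw [llsm_eq_smul_geomMean, Matrix.mulVec_smul, hA.mulVec_geomMean, smul_comm]
end
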